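/- Let K be a field of characteristic zero and h_1,...,h_n ∈ K[x_1,...,x_n]. If h_1,...,h_n are algebraically independent over K, then the determinant of the Jacobian matrix (∂h_i/∂x_j) is a nonzero polynomial in K[x_1,...,x_n]. -/

import Mathlib

/-- A derivation into a torsion-free module kills every element that is algebraic over a base ring
of characteristic zero. -/
theorem Derivation.eq_zero_of_isAlgebraic {A B M : Type*} [CommRing A] [IsDomain A] [CharZero A]
    [CommRing B] [IsDomain B] [Algebra A B] [FaithfulSMul A B] [AddCommGroup M] [Module A M]
    [Module B M] [Module.IsTorsionFree B M] (D : Derivation A B M) {f : B}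
    (hf : IsAlgebraic A f) : D f = 0 := by
  obtain ⟨p, hp, hpf⟩ := hf
  induction hd : p.natDegree using Nat.strong_induction_on generalizing p with
  | _ d ih =>
    have hD : Polynomial.aeval f (Polynomial.derivative p) • D f = 0 := by
      rw [← D.map_aeval, hpf, map_zero]
    refine (smul_eq_zero.mp hD).elim (fun hpf' => ?_) id
    have hdeg : p.natDegree ≠ 0 := fun h0 => by
      rw [Polynomial.eq_C_of_natDegree_eq_zero h0, Polynomial.aeval_C,
        FaithfulSMul.algebraMap_eq_zero_iff] at hpf
      exact hp (by rw [Polynomial.eq_C_of_natDegree_eq_zero h0, hpf, Polynomial.C_0])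
    exact ih _ (hd ▸ Polynomial.natDegree_derivative_lt hdeg) (Polynomial.derivative p)
      (fun h0 => hdeg (Polynomial.derivative_eq_zero.mp h0)) hpf' rfl

/-- A derivation that vanishes on a set is linear over the subalgebra generated by that set. -/
def Derivation.overAdjoin {R B M : Type*} [CommRing R] [CommRing B] [Algebra R B]
    [AddCommGroup M] [Module R M] [Module B M] (D : Derivation R B M) (s : Set B)
    (hs : Set.EqOn D 0 s) : Derivation (Algebra.adjoin R s) B M where
  toFun := D
  map_add' := map_add D
  map_smul' a x := by
    have ha : D (a : B) = 0 :=
      Derivation.eqOn_adjoin (D1 := D) (D2 := 0) hs a.2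
    simp [Algebra.smul_def, ha, Subalgebra.smul_def]
  map_one_eq_zero' := D.map_one_eq_zero
  leibniz' := D.leibniz

theorem stmt_7 {K : Type*} [Field K] [CharZero K] {n : ℕ}
    (h : Fin n → MvPolynomial (Fin n) K)
    (hind : AlgebraicIndependent K h) :
    Matrix.det (Matrix.of fun i j : Fin n => MvPolynomial.pderiv j (h i)) ≠ 0 := by
  intro hdet
  obtain ⟨v, hv, hJv⟩ := Matrix.exists_mulVec_eq_zero_iff.mpr hdet
  let D : Derivation K (MvPolynomial (Fin n) K) (MvPolynomial (Fin n) K) :=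
    ∑ j, v j • MvPolynomial.pderiv j
  have hD (f) : D f = ∑ j, v j * MvPolynomial.pderiv j f := by
    simp only [D, ← Derivation.coeFnAddMonoidHom_apply, map_sum, Finset.sum_apply]
    rfl
  have hDh : Set.EqOn D 0 (Set.range h) := by
    rintro _ ⟨i, rfl⟩
    simpa [hD, Matrix.mulVec, dotProduct, mul_comm] using congrFun hJv i
  have hbasis : IsTranscendenceBasis K h :=
    hind.isTranscendenceBasis_of_lift_trdeg_le_of_finite (by
      simp [MvPolynomial.trdeg_of_isDomain])
  have := hbasis.isAlgebraic
  refine hv (funext fun j => ?_)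
  have hDX : D (MvPolynomial.X j) = 0 :=
    (D.overAdjoin _ hDh).eq_zero_of_isAlgebraic (Algebra.IsAlgebraic.isAlgebraic _)
  simpa [hD, MvPolynomial.pderiv_X, Pi.single_apply] using hDX
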